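/- Fix n ≥ 3. On the space (ℝ²)^{ℤ/nℤ} of planar n-gons z = (z₁,…,zₙ) (indices mod n), let A(z) = ½·∑ᵢ ω(zᵢ, zᵢ₊₁) be the algebraic area, where ω(u,v) = u₁v₂ − u₂v₁, and for each i let vᵢ(z) ∈ (ℝ²)^{ℤ/nℤ} be the vector whose i-th component is zᵢ₊₁ − zᵢ₋₁ and whose other components are 0. Then for every z and every i, the derivative of A at z in the direction vᵢ(z) vanishes: dA_z(vᵢ(z)) = 0. Moreover, if z satisfies zᵢ₊₁ ≠ zᵢ₋₁ for all i, then the vectors v₁(z),…,vₙ(z) are linearly independent. -/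

import Mathlib

/-- The standard area form `ω(u,v) = u₁v₂ − u₂v₁` on `ℝ²`. -/
def symp2 (u v : ℝ × ℝ) : ℝ := u.1 * v.2 - u.2 * v.1

/-- The algebraic area `A(z) = ½ ∑ᵢ ω(zᵢ, zᵢ₊₁)` of a planar `n`-gon (indices mod `n`). -/
noncomputable def polyArea {n : ℕ} [NeZero n] (z : ZMod n → ℝ × ℝ) : ℝ :=
  (1 / 2) * ∑ i : ZMod n, symp2 (z i) (z (i + 1))

/-- The vector field `vᵢ`: its `i`-th component at `z` is `zᵢ₊₁ − zᵢ₋₁`, other components `0`. -/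
noncomputable def vfield {n : ℕ} [NeZero n] (i : ZMod n) (z : ZMod n → ℝ × ℝ) :
    ZMod n → ℝ × ℝ :=
  Pi.single i (z (i + 1) - z (i - 1))

/-! The area is a cyclic sum of values of the alternating form `ω`, so its differential is
`dA_z(w) = ½ ∑ᵢ ω(wᵢ, zᵢ₊₁ − zᵢ₋₁)`. On `vᵢ(z)` only the `i`-th term survives, and there both
arguments of `ω` equal `zᵢ₊₁ − zᵢ₋₁`. Linear independence holds because the `vᵢ(z)` are nonzero
vectors in distinct factors of the product `(ℝ²)^{ℤ/nℤ}`. -/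

section CyclicSum

variable {𝕜 E F ι : Type*} [NontriviallyNormedField 𝕜]
  [NormedAddCommGroup E] [NormedSpace 𝕜 E] [NormedAddCommGroup F] [NormedSpace 𝕜 F] [Fintype ι]

theorem hasFDerivAt_sum_bilinear_perm (B : E →L[𝕜] E →L[𝕜] F) (σ : Equiv.Perm ι) (z : ι → E) :
    HasFDerivAt (fun x : ι → E => ∑ i, B (x i) (x (σ i)))
      (∑ i, (B.flip (z (σ i)) + B (z (σ.symm i))).comp (ContinuousLinearMap.proj i)) z := by
  have hsum : HasFDerivAt (fun x : ι → E => ∑ i, B (x i) (x (σ i))) _ z :=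
    HasFDerivAt.fun_sum fun i _ =>
      B.hasFDerivAt_of_bilinear (hasFDerivAt_apply i z) (hasFDerivAt_apply (σ i) z)
  refine hsum.congr_fderiv (ContinuousLinearMap.ext fun w => ?_)
  have reindex : ∑ i, B (z i) (w (σ i)) = ∑ i, B (z (σ.symm i)) (w i) := by
    rw [← Equiv.sum_comp σ fun i => B (z (σ.symm i)) (w i)]
    simp only [Equiv.symm_apply_apply]
  simp [Finset.sum_add_distrib, reindex, add_comm]

end CyclicSum

theorem symp2_self (u : ℝ × ℝ) : symp2 u u = 0 := by
  simp [symp2, mul_comm]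

/-- The area form `ω` as a continuous bilinear map, which makes the calculus of bilinear maps
available for `symp2`. -/
noncomputable def symp2CLM : (ℝ × ℝ) →L[ℝ] (ℝ × ℝ) →L[ℝ] ℝ :=
  let π₁ := ContinuousLinearMap.fst ℝ ℝ ℝ
  let π₂ := ContinuousLinearMap.snd ℝ ℝ ℝ
  (ContinuousLinearMap.mul ℝ ℝ).bilinearComp π₁ π₂ -
    (ContinuousLinearMap.mul ℝ ℝ).bilinearComp π₂ π₁

@[simp]
theorem symp2CLM_apply (u v : ℝ × ℝ) : symp2CLM u v = symp2 u v := rfl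

section Polygon

variable {n : ℕ} [NeZero n]

theorem hasFDerivAt_polyArea (z : ZMod n → ℝ × ℝ) :
    HasFDerivAt polyArea
      ((1 / 2 : ℝ) • ∑ i, (symp2CLM.flip (z (i + 1) - z (i - 1))).comp
        (ContinuousLinearMap.proj i)) z := by
  have hderiv : HasFDerivAt polyArea _ z :=
    (hasFDerivAt_sum_bilinear_perm symp2CLM (Equiv.addRight 1) z).const_mul (1 / 2)
  have skew (a b : ℝ × ℝ) : symp2CLM.flip a + symp2CLM b = symp2CLM.flip (a - b) := by
    refine ContinuousLinearMap.ext fun u => ?_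
    change symp2 u a + symp2 b u = symp2 u (a - b)
    simp only [symp2, Prod.fst_sub, Prod.snd_sub]
    ring
  simpa only [skew, Equiv.coe_addRight, Equiv.addRight_symm, ← sub_eq_add_neg] using hderiv

theorem fderiv_polyArea_apply (z w : ZMod n → ℝ × ℝ) :
    fderiv ℝ polyArea z w = (1 / 2) * ∑ i, symp2 (w i) (z (i + 1) - z (i - 1)) := by
  rw [(hasFDerivAt_polyArea z).fderiv]
  simp [-map_sub]

theorem fderiv_polyArea_vfield (z : ZMod n → ℝ × ℝ) (i : ZMod n) :
    fderiv ℝ polyArea z (vfield i z) = 0 := by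
  rw [fderiv_polyArea_apply, Finset.sum_eq_zero, mul_zero]
  intro j _
  obtain rfl | hj := eq_or_ne j i
  · rw [vfield, Pi.single_eq_same, symp2_self]
  · simp [vfield, symp2, hj]

theorem linearIndependent_vfield {z : ZMod n → ℝ × ℝ} (hz : ∀ i, z (i + 1) ≠ z (i - 1)) :
    LinearIndependent ℝ fun i => vfield i z :=
  Pi.linearIndependent_single_of_ne_zero fun i => sub_ne_zero.mpr (hz i)

end Polygon

/-- For `n ≥ 3`: the derivative of the area `A` at any `n`-gon `z` in the
direction `vᵢ(z)` vanishes; and if `zᵢ₊₁ ≠ zᵢ₋₁` for all `i`, then `v₁(z),…,vₙ(z)` are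
linearly independent. -/
theorem stmt_8 (n : ℕ) [NeZero n] (hn : 3 ≤ n) :
    (∀ (z : ZMod n → ℝ × ℝ) (i : ZMod n),
        fderiv ℝ polyArea z (vfield i z) = 0) ∧
    (∀ z : ZMod n → ℝ × ℝ, (∀ i, z (i + 1) ≠ z (i - 1)) →
        LinearIndependent ℝ fun i => vfield i z) :=
  ⟨fderiv_polyArea_vfield, fun _ => linearIndependent_vfield⟩
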